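/- arXiv:1506.02367 — 2 statements merged into one kernel-verified Lean document; each statement's English description precedes it below -/
import Mathlib

section
/- Let L n denote the number of lambda terms of size n. Then L 0 = 0, L 1 = 1, L 2 = 2, L 3 = 4, and for every n ≥ 4 the linear holonomic recurrence (n+1)·L n = (4n−1)·L (n−1) − (2n−1)·L (n−2) − L (n−3) − (n−4)·L (n−4) holds (as an identity of integers). -/
/-- Lambda terms with de Bruijn indices. -/
inductive Term : Type
  | var : ℕ → Term
  | app : Term → Term → Term
  | abs : Term → Term

namespace Term

/-- Natural size: every operator (zero, successor, application, abstraction) has size 1. -/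
def size : Term → ℕ
  | var k => k + 1
  | app M N => M.size + N.size + 1
  | abs M => M.size + 1

end Term

/-- `L n` is the number of lambda terms of size `n`. -/
noncomputable def L (n : ℕ) : ℕ := Nat.card {t : Term // t.size = n}

/-!
Splitting a term at its head constructor gives `F = X (1 / (1 - X) + F + F²)` for the generating
function `F` of `L`. Completing the square, `w = 2 X F - (1 - X)` satisfies
`(1 - X) w² = 1 - 3 X - X² - X³`. Hence `w` is the square root of a rational function, so its
logarithmic derivative is rational: `w` satisfies a first-order linear differential equation with
polynomial coefficients. Reading off its coefficients gives the recurrence, because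
`coeff (n + 1) w = 2 L n` for `n ≥ 1`.
-/

section DifferentialEquation

open PowerSeries

theorem two_mul_mul_derivation_of_mul_sq_eq {R A : Type*} [CommSemiring R] [CommRing A]
    [Algebra R A] (D : Derivation R A A) {p q w : A} (h : q * w ^ 2 = p) :
    2 * (p * q * D w) = (q * D p - p * D q) * w := by
  have derivation_eq : D p = 2 * q * w * D w + w ^ 2 * D q := by
    rw [← h, D.leibniz, D.leibniz_pow]
    simp only [smul_eq_mul, nsmul_eq_mul, Nat.cast_ofNat]
    ring
  linear_combination -q * w * derivation_eq - (2 * q * D w + w * D q) * h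

theorem coeff_recurrence_of_mul_derivative_eq {R : Type*} [CommRing R] {w : R⟦X⟧}
    (ode : (1 - 4 * X + 2 * X ^ 2 + X ^ 4) * derivative R w = (X ^ 3 - X ^ 2 - X - 1) * w)
    (m : ℕ) :
    ((m : R) + 5) * coeff (m + 5) w =
      (4 * m + 15) * coeff (m + 4) w - (2 * m + 7) * coeff (m + 3) w
        - coeff (m + 2) w - m * coeff (m + 1) w := by
  set dw := derivative R w with hdw
  have expanded : dw - C 4 * (X ^ 1 * dw) + C 2 * (X ^ 2 * dw) + X ^ 4 * dw =
      X ^ 3 * w - X ^ 2 * w - X ^ 1 * w - w := by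
    rw [map_ofNat, map_ofNat]
    linear_combination ode
  have coeff_expanded :
      coeff (m + 5) w * (m + 4 + 1) - 4 * (coeff (m + 4) w * (m + 3 + 1))
          + 2 * (coeff (m + 3) w * (m + 2 + 1)) + coeff (m + 1) w * (m + 1) =
        coeff (m + 1) w - coeff (m + 2) w - coeff (m + 3) w - coeff (m + 4) w := by
    simpa [coeff_X_pow_mul', hdw, coeff_derivative] using congrArg (coeff (m + 4)) expanded
  linear_combination coeff_expanded

end DifferentialEquation

section Counting

open Finset.HasAntidiagonal (antidiagonal mem_antidiagonal)

namespace Term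

/-- The lambda terms of size `n`, as a subtype, so that `L n` is its cardinality. -/
abbrev OfSize (n : ℕ) : Type := {t : Term // t.size = n}

theorem size_pos (t : Term) : 0 < t.size := by
  cases t <;> simp [size]

instance isEmpty_ofSize_zero : IsEmpty (OfSize 0) :=
  ⟨fun t => t.1.size_pos.ne' t.2⟩

/-- Decomposition of a term of size `n + 1` by its head constructor: the variable `var n`, an
abstraction of a term of size `n`, or an application of two terms whose sizes add up to `n`. -/
def ofSizeSuccEquiv (n : ℕ) :
    OfSize (n + 1) ≃
      (Unit ⊕ OfSize n) ⊕ (Σ p : antidiagonal n, OfSize p.1.1 × OfSize p.1.2) where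
  toFun
    | ⟨var _, _⟩ => .inl (.inl ())
    | ⟨abs M, h⟩ => .inl (.inr ⟨M, Nat.succ.inj h⟩)
    | ⟨app M N, h⟩ =>
      .inr ⟨⟨(M.size, N.size), mem_antidiagonal.2 (Nat.succ.inj h)⟩, ⟨M, rfl⟩, ⟨N, rfl⟩⟩
  invFun
    | .inl (.inl _) => ⟨var n, rfl⟩
    | .inl (.inr M) => ⟨abs M, congrArg (· + 1) M.2⟩
    | .inr ⟨p, M, N⟩ =>
      ⟨app M N, by rw [size, M.2, N.2, mem_antidiagonal.1 p.2]⟩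
  left_inv := by
    rintro ⟨_ | _ | _, h⟩
    · cases h
      rfl
    · rfl
    · rfl
  right_inv := by
    rintro ((_ | _) | ⟨⟨⟨_, _⟩, _⟩, ⟨M, hM⟩, ⟨N, hN⟩⟩)
    · rfl
    · rfl
    · cases hM
      cases hN
      rfl

instance finite_ofSize (n : ℕ) : Finite (OfSize n) := by
  induction n using Nat.strong_induction_on with
  | _ n ih =>
    cases n with
    | zero => infer_instance
    | succ n =>
      have finite_body : Finite (OfSize n) := ih n n.lt_succ_self
      have finite_pair (p : antidiagonal n) : Finite (OfSize p.1.1 × OfSize p.1.2) := by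
        have finite_fst := ih p.1.1 (Finset.Nat.antidiagonal.fst_lt p.2)
        have finite_snd := ih p.1.2 (Finset.Nat.antidiagonal.snd_lt p.2)
        infer_instance
      exact .of_equiv _ (ofSizeSuccEquiv n).symm

end Term

theorem L_zero : L 0 = 0 :=
  Nat.card_of_isEmpty (α := Term.OfSize 0)

theorem L_succ (n : ℕ) :
    L (n + 1) = 1 + L n + ∑ p ∈ antidiagonal n, L p.1 * L p.2 := by
  unfold L
  rw [Nat.card_congr (Term.ofSizeSuccEquiv n), Nat.card_sum, Nat.card_sum, Nat.card_sigma,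
    Nat.card_unique, ← Finset.sum_coe_sort (antidiagonal n)]
  simp only [Nat.card_prod]

theorem L_one : L 1 = 1 := by
  simp [L_succ, L_zero]

theorem L_two : L 2 = 2 := by
  simp [L_succ 1, Finset.Nat.antidiagonal_succ, L_zero, L_one]

theorem L_three : L 3 = 4 := by
  simp [L_succ 2, Finset.Nat.antidiagonal_succ, L_zero, L_one, L_two]

end Counting

section GeneratingFunction

open PowerSeries

/-- The generating function of the number of lambda terms by size, over `ℤ` so that subtraction
is available. -/
noncomputable def termSeries : ℤ⟦X⟧ := mk fun n => (L n : ℤ)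

theorem termSeries_eq_X_mul :
    termSeries = X * (mk 1 + termSeries + termSeries * termSeries) := by
  ext n
  cases n with
  | zero => simp [termSeries, L_zero]
  | succ n =>
    rw [coeff_succ_X_mul]
    simp [termSeries, coeff_mul, L_succ]

/-- The square root `2 a F + b` of the discriminant of the quadratic equation `a F² + b F + c = 0`
satisfied by `F = termSeries`, where `a = X`, `b = -(1 - X)` and `c = X / (1 - X)`. -/
noncomputable def discrimRoot : ℤ⟦X⟧ := 2 * X * termSeries + -(1 - X)

theorem one_sub_X_mul_discrimRoot_sq :
    (1 - X) * discrimRoot ^ 2 = 1 - 3 * X - X ^ 2 - X ^ 3 := by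
  have quadratic :
      X * (termSeries * termSeries) + -(1 - X) * termSeries + X * mk 1 = 0 := by
    linear_combination -termSeries_eq_X_mul
  have geometric : (mk 1 : ℤ⟦X⟧) * (1 - X) = 1 := mk_one_mul_one_sub_eq_one ℤ
  rw [discrimRoot, ← discrim_eq_sq_of_quadratic_eq_zero quadratic, discrim]
  linear_combination -4 * X ^ 2 * geometric

theorem mul_derivative_discrimRoot :
    (1 - 4 * X + 2 * X ^ 2 + X ^ 4) * derivative ℤ discrimRoot =
      (X ^ 3 - X ^ 2 - X - 1) * discrimRoot := by
  have derivative_num :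
      derivative ℤ (1 - 3 * X - X ^ 2 - X ^ 3 : ℤ⟦X⟧) = -3 - 2 * X - 3 * X ^ 2 := by
    have derivative_three : derivative ℤ (3 : ℤ⟦X⟧) = 0 := (derivative ℤ).map_natCast 3
    simp [Derivation.leibniz_pow, derivative_three]
  have derivative_den : derivative ℤ (1 - X : ℤ⟦X⟧) = -1 := by simp
  have ode := two_mul_mul_derivation_of_mul_sq_eq (derivative ℤ) one_sub_X_mul_discrimRoot_sq
  rw [derivative_num, derivative_den] at ode
  have two_series_ne_zero : (2 : ℤ⟦X⟧) ≠ 0 :=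
    map_ofNat (C (R := ℤ)) 2 ▸ (map_ne_zero_iff C C_injective).2 two_ne_zero
  refine mul_left_cancel₀ two_series_ne_zero ?_
  linear_combination ode

theorem coeff_add_two_discrimRoot (n : ℕ) : coeff (n + 2) discrimRoot = 2 * L (n + 1) := by
  have hw : discrimRoot = X * (C 2 * termSeries) + X - 1 := by
    rw [discrimRoot, map_ofNat]
    ring
  rw [hw, map_sub, map_add, coeff_succ_X_mul, coeff_C_mul]
  simp [termSeries, coeff_X, coeff_one]

theorem L_add_four (m : ℕ) :
    ((m : ℤ) + 5) * L (m + 4) =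
      (4 * m + 15) * L (m + 3) - (2 * m + 7) * L (m + 2) - L (m + 1) - m * L m := by
  have recurrence := coeff_recurrence_of_mul_derivative_eq mul_derivative_discrimRoot m
  -- `coeff 1 discrimRoot = 2 * L 0 + 1`, but this term enters only with the factor `m = 0`.
  have lowest_term : (m : ℤ) * coeff (m + 1) discrimRoot = m * (2 * L m) := by
    cases m with
    | zero => simp
    | succ m => rw [coeff_add_two_discrimRoot]
  rw [lowest_term] at recurrence
  simp only [coeff_add_two_discrimRoot] at recurrence
  linarith

end GeneratingFunction

theorem L_holonomic_recurrence :
    L 0 = 0 ∧ L 1 = 1 ∧ L 2 = 2 ∧ L 3 = 4 ∧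
    ∀ n : ℕ, 4 ≤ n →
      ((n : ℤ) + 1) * L n =
        (4 * (n : ℤ) - 1) * L (n - 1) - (2 * (n : ℤ) - 1) * L (n - 2)
          - L (n - 3) - ((n : ℤ) - 4) * L (n - 4) := by
  refine ⟨L_zero, L_one, L_two, L_three, fun n hn => ?_⟩
  obtain ⟨m, rfl⟩ := Nat.exists_eq_add_of_le' hn
  simp only [Nat.reduceSubDiff, Nat.add_sub_cancel, Nat.cast_add, Nat.cast_ofNat]
  linear_combination L_add_four m
end

section
/- For every n : ℕ, the number of lambda terms of size n equals the number of zigzag-free binary trees with n nodes. (Equivalently, the maps LToBz and BzToL of the paper are mutually inverse size-preserving bijections between lambda terms and zigzag-free trees.) -/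
/-- Binary trees, where each node has an optional left child and an optional right child
(`nil` denotes the absence of a child; the empty tree is `nil`). -/
inductive BTree : Type
  | nil : BTree
  | node : BTree → BTree → BTree

/-- Number of nodes of a binary tree. -/
def BTree.size : BTree → ℕ
  | .nil => 0
  | .node l r => l.size + r.size + 1

/-- A binary tree is zigzag-free if it contains no node whose left child
has a right child but no left child. -/
def BTree.zigzagFree : BTree → Prop
  | .nil => True
  | .node l r =>
      (∀ a b : BTree, l ≠ .node .nil (.node a b)) ∧ l.zigzagFree ∧ r.zigzagFree

/-!
Send the index `k` to the path of `k + 1` nodes going left, and `λ M` to a root whose only child is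
the tree of `M`, on the right. For `M N` one would like a root with the trees of `M` and `N` as
children; this creates a zigzag exactly when `M` is an abstraction. In that case, `(λ M) N` is sent
instead to a root whose only child is the tree of `M N`, on the left. So the shape of the root
determines the last step: leaf for `var 0`, only a right child for an abstraction, two children for
an application whose function part is not an abstraction, and only a left child for a successor
index or a redex, according to whether the child is the tree of an index or of an application.
-/

namespace BTree

variable {l r : BTree}

/-- The path of `k + 1` nodes, each one the left child of the previous one: the tree of `var k`. -/
def leftPath : ℕ → BTree
  | 0 => .node .nil .nil
  | k + 1 => .node (leftPath k) .nil

/-- The tree of an application, computed from the trees of its two parts. The leading abstractions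
of the function part become nodes with only a left child, which avoids creating a zigzag. -/
def graft : BTree → BTree → BTree
  | .node .nil (.node a b), r => .node (graft (.node a b) r) .nil
  | l, r => .node l r

theorem leftPath_ne_nil (k : ℕ) : leftPath k ≠ .nil := by
  cases k <;> simp [leftPath]

theorem size_leftPath (k : ℕ) : (leftPath k).size = k + 1 := by
  induction k with
  | zero => rfl
  | succ k ih => simp [leftPath, size, ih]

theorem zigzagFree_leftPath (k : ℕ) : (leftPath k).zigzagFree := by
  induction k with
  | zero => simp [leftPath, zigzagFree]
  | succ k ih => exact ⟨by cases k <;> simp [leftPath], ih, trivial⟩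

theorem graft_ne_nil (l r : BTree) : graft l r ≠ .nil := by
  fun_cases graft l r <;> simp

theorem graft_node_nil (hr : r ≠ .nil) (s : BTree) :
    graft (.node .nil r) s = .node (graft r s) .nil := by
  cases r with
  | nil => contradiction
  | node a b => rfl

theorem graft_eq_node (hl : ∀ a b, l ≠ .node .nil (.node a b)) (r : BTree) :
    graft l r = .node l r := by
  rw [graft]
  exact hl

theorem size_graft (l r : BTree) : (graft l r).size = l.size + r.size + 1 := by
  fun_induction graft l r <;> grind [size]

theorem graft_ne_node_nil (hl : l ≠ .nil) (r s : BTree) : graft l r ≠ .node .nil s := by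
  fun_cases graft l r <;> simp [graft_ne_nil, hl]

theorem zigzagFree_graft (hl : l.zigzagFree) (hr : r.zigzagFree) : (graft l r).zigzagFree := by
  fun_induction graft l r with
  | case1 a b r ih =>
    exact ⟨fun _ _ => graft_ne_node_nil (by simp) _ _, ih hl.2.2 hr, trivial⟩
  | case2 l r h_no_zigzag => exact ⟨h_no_zigzag, hl, hr⟩

end BTree

namespace Term

/-- The zigzag-free tree of a lambda term, the forward map of the bijection. -/
def toTree : Term → BTree
  | var k => .leftPath k
  | app M N => .graft M.toTree N.toTree
  | abs M => .node .nil M.toTree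

theorem toTree_ne_nil (M : Term) : M.toTree ≠ .nil := by
  cases M <;> simp [toTree, BTree.leftPath_ne_nil, BTree.graft_ne_nil]

theorem size_toTree (M : Term) : M.toTree.size = M.size := by
  induction M with
  | var k => exact BTree.size_leftPath k
  | app M N ihM ihN => simp [toTree, size, BTree.size_graft, ihM, ihN]
  | abs M ih => simp [toTree, size, BTree.size, ih]

theorem zigzagFree_toTree (M : Term) : M.toTree.zigzagFree := by
  induction M with
  | var k => exact BTree.zigzagFree_leftPath k
  | app M N ihM ihN => exact BTree.zigzagFree_graft ihM ihN
  | abs M ih => exact ⟨by simp, trivial, ih⟩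

/-- The operation on terms that corresponds to adding a root with only a left child to the tree. Its
value on abstractions is a junk value: their trees cannot be left children without a zigzag. -/
def raise : Term → Term
  | var k => var (k + 1)
  | app M N => app (abs M) N
  | abs M => abs M

theorem toTree_raise {M : Term} (hM : ∀ N, M ≠ abs N) : M.raise.toTree = .node M.toTree .nil := by
  cases M with
  | var k => rfl
  | app M N => exact BTree.graft_node_nil M.toTree_ne_nil N.toTree
  | abs M => exact absurd rfl (hM M)

end Term

namespace BTree

variable {l r : BTree}

/-- The lambda term of a nonempty zigzag-free tree, the inverse of `Term.toTree`, with the junk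
value `var 0` at the empty tree. -/
def toTerm : BTree → Term
  | .nil => .var 0
  | .node .nil .nil => .var 0
  | .node .nil r => .abs r.toTerm
  | .node l .nil => l.toTerm.raise
  | .node l r => .app l.toTerm r.toTerm

theorem toTerm_leftPath (k : ℕ) : (leftPath k).toTerm = .var k := by
  induction k with
  | zero => rfl
  | succ k ih => simp [leftPath, toTerm, leftPath_ne_nil, ih, Term.raise]

theorem toTerm_graft (hl : l ≠ .nil) (hr : r ≠ .nil) :
    (graft l r).toTerm = .app l.toTerm r.toTerm := by
  fun_induction graft l r with
  | case1 a b r ih => simp [toTerm, graft_ne_nil, ih (by simp) hr, Term.raise]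
  | case2 l r => simp [toTerm, hl, hr]

theorem toTerm_toTree (M : Term) : M.toTree.toTerm = M := by
  induction M with
  | var k => exact toTerm_leftPath k
  | app M N ihM ihN =>
    rw [Term.toTree, toTerm_graft M.toTree_ne_nil N.toTree_ne_nil, ihM, ihN]
  | abs M ih => simp [Term.toTree, toTerm, M.toTree_ne_nil, ih]

theorem toTerm_ne_abs (hl : l.toTerm.toTree = l) (h_no_zigzag : ∀ a b, l ≠ .node .nil (.node a b))
    (M : Term) : l.toTerm ≠ .abs M := by
  intro h_abs
  rw [h_abs, Term.toTree] at hl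
  cases hM : M.toTree with
  | nil => exact M.toTree_ne_nil hM
  | node a b => exact h_no_zigzag a b (by rw [← hl, hM])

theorem toTree_toTerm {t : BTree} (ht : t ≠ .nil) (hz : t.zigzagFree) : t.toTerm.toTree = t := by
  fun_induction toTerm t with
  | case1 => contradiction
  | case2 => rfl
  | case3 r hr ih => rw [Term.toTree, ih hr hz.2.2]
  | case4 l hl ih =>
    have hl_inv := ih hl hz.2.1
    rw [Term.toTree_raise (toTerm_ne_abs hl_inv hz.1), hl_inv]
  | case5 l r _ hl hr ihl ihr =>
    rw [Term.toTree, ihl hl hz.2.1, ihr hr hz.2.2, graft_eq_node hz.1]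

end BTree

/-- The bijection between lambda terms and nonempty zigzag-free trees. -/
def Term.equivZigzagFree : Term ≃ {t : BTree // t ≠ .nil ∧ t.zigzagFree} where
  toFun M := ⟨M.toTree, M.toTree_ne_nil, M.zigzagFree_toTree⟩
  invFun t := t.1.toTerm
  left_inv := BTree.toTerm_toTree
  right_inv t := Subtype.ext (BTree.toTree_toTerm t.2.1 t.2.2)

theorem lambda_equinumerous_zigzagFree :
    ∀ n : ℕ,
      L n = Nat.card {t : BTree // t ≠ .nil ∧ t.zigzagFree ∧ t.size = n} := by
  intro n
  calc
    L n = Nat.card {t : {t : BTree // t ≠ .nil ∧ t.zigzagFree} // t.1.size = n} :=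
      Nat.card_congr (Term.equivZigzagFree.subtypeEquiv fun M => by
        rw [← M.size_toTree, Term.equivZigzagFree, Equiv.coe_fn_mk])
    _ = Nat.card {t : BTree // (t ≠ .nil ∧ t.zigzagFree) ∧ t.size = n} :=
      Nat.card_congr (Equiv.subtypeSubtypeEquivSubtypeInter _ (BTree.size · = n))
    _ = Nat.card {t : BTree // t ≠ .nil ∧ t.zigzagFree ∧ t.size = n} := by
      simp only [and_assoc]
end
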